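/- Let {μ_v}_{v∈G} be a σ-dimensional quasi-conformal density on the Bowditch boundary ∂G. If μ_1 gives positive measure to the set of conical points of ∂G, then the Poincaré series Σ_{g∈G} exp(−σ d(1,g)) diverges; in particular σ ≤ δ_G. -/

import Mathlib

open Filter Topology Set
open scoped ENNReal NNReal

/-- The word length of `g` with respect to a generating set `S`. -/
noncomputable def wlen {G : Type*} [Group G] (S : Set G) (g : G) : ℕ :=
  sInf {n : ℕ | ∃ w : List G, (∀ x ∈ w, x ∈ S) ∧ w.length = n ∧ w.prod = g}

/-- The word metric on `G` with respect to a generating set `S`. -/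
noncomputable def wdist {G : Type*} [Group G] (S : Set G) (g h : G) : ℕ :=
  wlen S (g⁻¹ * h)

/-- The exponential growth rate of a subset `A` of `G` with respect to the word metric of `S`:
`limsup (1/n) log #(A ∩ B(1,n))`. -/
noncomputable def growthRateOn {G : Type*} [Group G] (S : Set G) (A : Set G) : ℝ :=
  Filter.limsup
    (fun n : ℕ => Real.log (Nat.card {g : G // g ∈ A ∧ wlen S g ≤ n}) / (n : ℝ))
    Filter.atTop

/-- The exponential growth rate of `G` with respect to the word metric of `S`. -/
noncomputable def growthRate {G : Type*} [Group G] (S : Set G) : ℝ :=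
  growthRateOn S Set.univ

/-- `S` is a finite symmetric generating set of `G` not containing the identity. -/
def IsSymmGen {G : Type*} [Group G] (S : Set G) : Prop :=
  S.Finite ∧ Subgroup.closure S = ⊤ ∧ (∀ s ∈ S, s⁻¹ ∈ S) ∧ (1 : G) ∉ S

/-- A group is elementary if it is finite or a finite extension of a cyclic group,
i.e. it has a cyclic subgroup of finite index. -/
def IsElementaryGroup (G : Type*) [Group G] : Prop :=
  ∃ (g : G) (H : Subgroup G), H = Subgroup.zpowers g ∧ H.FiniteIndex

/-- The critical exponent of the Poincaré series `∑_{a ∈ A} exp(-s |a|_S)`. -/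
noncomputable def poincareExp {G : Type*} [Group G] (S : Set G) (A : Set G) : ℝ :=
  sInf {s : ℝ | Summable (fun a : A => Real.exp (-(s * (wlen S (a : G) : ℝ))))}
/-- A metric space is geodesic if every pair of points is joined by an isometrically
parametrized path. -/
def IsGeodesicSpace (X : Type*) [MetricSpace X] : Prop :=
  ∀ x y : X, ∃ f : ℝ → X, f 0 = x ∧ f (dist x y) = y ∧
    ∀ s ∈ Set.Icc (0 : ℝ) (dist x y), ∀ t ∈ Set.Icc (0 : ℝ) (dist x y),
      dist (f s) (f t) = |s - t|

/-- Gromov hyperbolicity, via the four-point condition on Gromov products. -/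
def IsGromovHyperbolic (X : Type*) [MetricSpace X] : Prop :=
  ∃ δ : ℝ, 0 ≤ δ ∧ ∀ x y z w : X,
    min (dist x w + dist y w - dist x y) (dist y w + dist z w - dist y z) - 2 * δ ≤
      dist x w + dist z w - dist x z

/-- A (metrically) proper isometric action: orbits are discrete with finite multiplicity. -/
def ProperAction {G : Type*} [Group G] {X : Type*} [MetricSpace X]
    (ρ : G →* X ≃ᵢ X) : Prop :=
  ∀ x : X, ∀ r : ℝ, {g : G | dist x (ρ g x) ≤ r}.Finite

/-- The (setwise) stabilizer of a subset `U` of `X` under the action `ρ`. -/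
def horoStab {G : Type*} [Group G] {X : Type*} [MetricSpace X]
    (ρ : G →* X ≃ᵢ X) (U : Set X) : Set G :=
  {g : G | (fun x => ρ g x) '' U = U}

/-- A cusp-uniform action: a proper isometric action together with a `G`-invariant system of
open horoballs (each with infinite, parabolic, stabilizer) such that the action on the
complement of the horoballs is cocompact. -/
structure IsCuspUniform {G : Type*} [Group G] {X : Type*} [MetricSpace X]
    (ρ : G →* X ≃ᵢ X) (𝕌 : Set (Set X)) : Prop where
  proper : ProperAction ρ
  horo_open : ∀ U ∈ 𝕌, IsOpen U
  horo_inv : ∀ (g : G), ∀ U ∈ 𝕌, (fun x => ρ g x) '' U ∈ 𝕌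
  horo_par : ∀ U ∈ 𝕌, (horoStab ρ U).Infinite
  cocompact : ∃ K : Set X, IsCompact K ∧ (⋃₀ 𝕌)ᶜ ⊆ ⋃ g : G, (fun x => ρ g x) '' K

/-- A witness that `G` is hyperbolic relative to the collection `Ps` of peripheral subgroups:
a cusp-uniform action on a proper geodesic hyperbolic space whose horoball stabilizers
(the maximal parabolic subgroups) are precisely the conjugates of members of `Ps`. -/
structure RelHypWitness (G : Type*) [Group G] (Ps : Set (Subgroup G)) where
  X : Type
  [ms : MetricSpace X]
  proper : ProperSpace X
  geodesic : IsGeodesicSpace X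
  hyperbolic : IsGromovHyperbolic X
  ρ : G →* X ≃ᵢ X
  horoballs : Set (Set X)
  cusp : IsCuspUniform ρ horoballs
  peri_max : ∀ U ∈ horoballs, ∃ P ∈ Ps, ∃ g : G,
      horoStab ρ U = (fun x => g * x * g⁻¹) '' (P : Set G)
  peri_real : ∀ P ∈ Ps, ∃ U ∈ horoballs, horoStab ρ U = (P : Set G)

/-- `G` is hyperbolic relative to the collection of subgroups `Ps`. -/
def IsRelHypWrt (G : Type*) [Group G] (Ps : Set (Subgroup G)) : Prop :=
  Nonempty (RelHypWitness G Ps)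

/-- `G` is a relatively hyperbolic group (relative to some finite collection of subgroups). -/
def IsRelativelyHyperbolicGroup (G : Type*) [Group G] : Prop :=
  ∃ Ps : Set (Subgroup G), Ps.Finite ∧ IsRelHypWrt G Ps

/-- The growth rate of the quotient group `G ⧸ Γ` with respect to the image of `S`. -/
noncomputable def quotGrowthRate {G : Type*} [Group G] (S : Set G)
    (Γ : Subgroup G) (h : Γ.Normal) : ℝ :=
  @growthRate (G ⧸ Γ) (@QuotientGroup.Quotient.group G _ Γ h)
    ((fun g : G => (QuotientGroup.mk g : G ⧸ Γ)) '' S)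

/-- The quotient `G ⧸ Γ` is a relatively hyperbolic group. -/
def quotIsRelHyp {G : Type*} [Group G] (Γ : Subgroup G) (h : Γ.Normal) : Prop :=
  @IsRelativelyHyperbolicGroup (G ⧸ Γ) (@QuotientGroup.Quotient.group G _ Γ h)

/-- The critical exponent of the orbital counting function of `A ⊆ G` for the action `ρ`
at basepoint `o`. -/
noncomputable def critExpOn {G : Type*} [Group G] {X : Type*} [MetricSpace X]
    (ρ : G →* X ≃ᵢ X) (o : X) (A : Set G) : ℝ :=
  Filter.limsup
    (fun n : ℕ =>
      Real.log (Nat.card {g : G // g ∈ A ∧ dist o (ρ g o) ≤ (n : ℝ)}) / (n : ℝ))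
    Filter.atTop

/-- The critical exponent (growth rate) of the action `ρ` of `G` on `X` at basepoint `o`. -/
noncomputable def critExp {G : Type*} [Group G] {X : Type*} [MetricSpace X]
    (ρ : G →* X ≃ᵢ X) (o : X) : ℝ :=
  critExpOn ρ o Set.univ

/-- The displacement of the coset `c ∈ G ⧸ Γ` in the quotient metric space `X ⧸ Γ`:
`d̄(Γo, Γ(go)) = inf_{γ ∈ Γ} d(o, γ g o)`. -/
noncomputable def quotDisp {G : Type*} [Group G] {X : Type*} [MetricSpace X]
    (ρ : G →* X ≃ᵢ X) (o : X) (Γ : Subgroup G) (c : G ⧸ Γ) : ℝ :=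
  ⨅ g : {g : G // (QuotientGroup.mk g : G ⧸ Γ) = c}, dist o (ρ (g : G) o)

/-- The critical exponent of the induced action of `G ⧸ Γ` on the quotient metric space
`X ⧸ Γ` equipped with the quotient metric. -/
noncomputable def quotCritExp {G : Type*} [Group G] {X : Type*} [MetricSpace X]
    (ρ : G →* X ≃ᵢ X) (o : X) (Γ : Subgroup G) : ℝ :=
  Filter.limsup
    (fun n : ℕ =>
      Real.log (Nat.card {c : G ⧸ Γ // quotDisp ρ o Γ c ≤ (n : ℝ)}) / (n : ℝ))
    Filter.atTop

/-- The parabolic gap property: every maximal parabolic subgroup (horoball stabilizer) has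
critical exponent strictly less than that of `G`. -/
def ParabolicGap {G : Type*} [Group G] {X : Type*} [MetricSpace X]
    (ρ : G →* X ≃ᵢ X) (o : X) (𝕌 : Set (Set X)) : Prop :=
  ∀ U ∈ 𝕌, critExpOn ρ o (horoStab ρ U) < critExp ρ o
/-- `γ` restricted to `{0, …, m}` is a geodesic in the Cayley graph of `(G,S)`. -/
def IsGeodesicSeq {G : Type*} [Group G] (S : Set G) (γ : ℕ → G) (m : ℕ) : Prop :=
  ∀ i ≤ m, ∀ j ≤ m, wdist S (γ i) (γ j) = ((i : ℤ) - (j : ℤ)).natAbs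

/-- `γ` is a geodesic ray in the Cayley graph of `(G,S)`. -/
def IsGeodesicRay {G : Type*} [Group G] (S : Set G) (γ : ℕ → G) : Prop :=
  ∀ i j : ℕ, wdist S (γ i) (γ j) = ((i : ℤ) - (j : ℤ)).natAbs

/-- The collection `ℙ` of peripheral (left) cosets of the peripheral subgroups `Ps`. -/
def periCosets {G : Type*} [Group G] (Ps : Set (Subgroup G)) : Set (Set G) :=
  {A | ∃ g : G, ∃ P ∈ Ps, A = (fun x => g * x) '' (P : Set G)}

/-- The point `γ i` of the geodesic `γ : {0,…,m} → G` is `(ε,R)`-deep in some member of `ℙ`: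
both endpoints of `γ` lie outside `B(γ i, R)` and `γ ∩ B(γ i, R) ⊆ N_ε(A)` for some `A ∈ ℙ`. -/
def deepAt {G : Type*} [Group G] (S : Set G) (ℙ : Set (Set G)) (γ : ℕ → G) (m i : ℕ)
    (ε R : ℝ) : Prop :=
  ∃ A ∈ ℙ, R < (wdist S (γ 0) (γ i) : ℝ) ∧ R < (wdist S (γ m) (γ i) : ℝ) ∧
    ∀ j ≤ m, (wdist S (γ i) (γ j) : ℝ) ≤ R → ∃ a ∈ A, (wdist S (γ j) a : ℝ) ≤ ε

/-- The point `γ i` is an `(ε,R)`-transition point of the geodesic `γ : {0,…,m} → G`. -/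
def transitionAt {G : Type*} [Group G] (S : Set G) (ℙ : Set (Set G)) (γ : ℕ → G) (m i : ℕ)
    (ε R : ℝ) : Prop :=
  ¬ deepAt S ℙ γ m i ε R

/-- The point `γ i` of the geodesic ray `γ` is `(ε,R)`-deep in some member of `ℙ`. -/
def deepAtRay {G : Type*} [Group G] (S : Set G) (ℙ : Set (Set G)) (γ : ℕ → G) (i : ℕ)
    (ε R : ℝ) : Prop :=
  ∃ A ∈ ℙ, R < (wdist S (γ 0) (γ i) : ℝ) ∧
    ∀ j : ℕ, (wdist S (γ i) (γ j) : ℝ) ≤ R → ∃ a ∈ A, (wdist S (γ j) a : ℝ) ≤ ε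

/-- The point `γ i` is an `(ε,R)`-transition point of the geodesic ray `γ`. -/
def transitionAtRay {G : Type*} [Group G] (S : Set G) (ℙ : Set (Set G)) (γ : ℕ → G) (i : ℕ)
    (ε R : ℝ) : Prop :=
  ¬ deepAtRay S ℙ γ i ε R

/-- The cone `Ω_r(g)`: elements `h` such that some word geodesic `[1,h]` meets `B(g,r)`. -/
def cone {G : Type*} [Group G] (S : Set G) (r : ℝ) (g : G) : Set G :=
  {h | ∃ (γ : ℕ → G) (m : ℕ), IsGeodesicSeq S γ m ∧ γ 0 = 1 ∧ γ m = h ∧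
      ∃ i ≤ m, (wdist S (γ i) g : ℝ) ≤ r}

/-- The partial cone `Ω_{r,ε,R}(g)`: elements `h` such that some word geodesic `[1,h]` meets
`B(g,r)` and, moreover, either `d(1,h) ≤ d(1,g) + 2R` or this geodesic has an
`(ε,R)`-transition point at distance at most `2R` from `g`. -/
def partialCone {G : Type*} [Group G] (S : Set G) (ℙ : Set (Set G)) (r ε R : ℝ) (g : G) :
    Set G :=
  {h | ∃ (γ : ℕ → G) (m : ℕ), IsGeodesicSeq S γ m ∧ γ 0 = 1 ∧ γ m = h ∧
      (∃ i ≤ m, (wdist S (γ i) g : ℝ) ≤ r) ∧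
      ((wdist S 1 h : ℝ) ≤ (wdist S 1 g : ℝ) + 2 * R ∨
        ∃ i ≤ m, transitionAt S ℙ γ m i ε R ∧ (wdist S (γ i) g : ℝ) ≤ 2 * R)}

/-- The partial cone `Ω_{ε,R}(g)` of geodesics passing through `g`. -/
def partialConeThrough {G : Type*} [Group G] (S : Set G) (ℙ : Set (Set G)) (ε R : ℝ)
    (g : G) : Set G :=
  {h | ∃ (γ : ℕ → G) (m : ℕ), IsGeodesicSeq S γ m ∧ γ 0 = 1 ∧ γ m = h ∧
      (∃ i ≤ m, γ i = g) ∧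
      ((wdist S 1 h : ℝ) ≤ (wdist S 1 g : ℝ) + 2 * R ∨
        ∃ i ≤ m, transitionAt S ℙ γ m i ε R ∧ (wdist S (γ i) g : ℝ) ≤ 2 * R)}

/-- The annulus `A(g,n,Δ) = {h : n − Δ ≤ d(1,h) − d(1,g) < n + Δ}`. -/
def annulus {G : Type*} [Group G] (S : Set G) (g : G) (n Δ : ℝ) : Set G :=
  {h | n - Δ ≤ (wdist S 1 h : ℝ) - (wdist S 1 g : ℝ) ∧
       (wdist S 1 h : ℝ) - (wdist S 1 g : ℝ) < n + Δ}
/-- The boundary of `G` in the compactification `Z ⊇ ι(G)`. -/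
def bdryZ {G : Type*} {Z : Type*} (ι : G → Z) : Set Z := (Set.range ι)ᶜ

/-- Geodesic rays in `𝒢(G,S)` issuing from `v` and converging to `ξ ∈ Z`. -/
def raysTo {G : Type*} [Group G] {Z : Type*} [TopologicalSpace Z] (S : Set G) (ι : G → Z)
    (ξ : Z) (v : G) : Set (ℕ → G) :=
  {γ | γ 0 = v ∧ IsGeodesicRay S γ ∧
    Filter.Tendsto (fun n => ι (γ n)) Filter.atTop (nhds ξ)}

/-- Geodesic rays in `𝒢(G,S)` converging to `ξ ∈ Z` (with arbitrary initial point). -/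
def raysEnding {G : Type*} [Group G] {Z : Type*} [TopologicalSpace Z] (S : Set G)
    (ι : G → Z) (ξ : Z) : Set (ℕ → G) :=
  {γ | IsGeodesicRay S γ ∧ Filter.Tendsto (fun n => ι (γ n)) Filter.atTop (nhds ξ)}

/-- The set of conical limit points of the action of `G` on the boundary `Z ∖ ι(G)`. -/
def conicalPts (G : Type*) [Group G] {Z : Type*} [TopologicalSpace Z] [MulAction G Z]
    (ι : G → Z) : Set Z :=
  {ξ | ξ ∈ bdryZ ι ∧ ∃ (gs : ℕ → G) (a b : Z), a ∈ bdryZ ι ∧ b ∈ bdryZ ι ∧ a ≠ b ∧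
      ∀ ζ ∈ bdryZ ι, ζ ≠ ξ →
        Filter.Tendsto (fun n => gs n • ξ) Filter.atTop (nhds a) ∧
        Filter.Tendsto (fun n => gs n • ζ) Filter.atTop (nhds b)}

/-- `q` is a bounded parabolic point: its stabilizer is infinite and acts properly and
cocompactly on `∂G ∖ {q}`. -/
def IsBddParabolicPt (G : Type*) [Group G] {Z : Type*} [TopologicalSpace Z] [MulAction G Z]
    (ι : G → Z) (q : Z) : Prop :=
  q ∈ bdryZ ι ∧ {g : G | g • q = q}.Infinite ∧
    (∃ K : Set Z, IsCompact K ∧ K ⊆ bdryZ ι \ {q} ∧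
      ∀ ξ ∈ bdryZ ι \ {q}, ∃ g : G, g • q = q ∧ g • ξ ∈ K) ∧
    ∀ K : Set Z, IsCompact K → K ⊆ bdryZ ι \ {q} →
      {g : G | g • q = q ∧ ((fun z : Z => g • z) '' K ∩ K).Nonempty}.Finite

/-- The shadow `Π_r(g)`: boundary points `ξ` such that some geodesic ray `[1,ξ]` meets
the ball `B(g,r)`. -/
def shadow {G : Type*} [Group G] {Z : Type*} [TopologicalSpace Z] (S : Set G) (ι : G → Z)
    (r : ℝ) (g : G) : Set Z :=
  {ξ | ξ ∈ bdryZ ι ∧ ∃ γ ∈ raysTo S ι ξ 1, ∃ n : ℕ, (wdist S (γ n) g : ℝ) ≤ r}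

/-- The strong shadow `ϖ_r(g)`: boundary points `ξ` such that every geodesic ray `[1,ξ]`
meets the ball `B(g,r)`. -/
def strongShadow {G : Type*} [Group G] {Z : Type*} [TopologicalSpace Z] (S : Set G)
    (ι : G → Z) (r : ℝ) (g : G) : Set Z :=
  {ξ | ξ ∈ bdryZ ι ∧ (raysTo S ι ξ 1).Nonempty ∧
      ∀ γ ∈ raysTo S ι ξ 1, ∃ n : ℕ, (wdist S (γ n) g : ℝ) ≤ r}

/-- The partial shadow `Π_{r,ε,R}(g)`: boundary points `ξ` such that some geodesic ray
`[1,ξ]` meets `B(g,r)` and contains an `(ε,R)`-transition point in `B(g,2R)`. -/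
def partialShadow {G : Type*} [Group G] {Z : Type*} [TopologicalSpace Z] (S : Set G)
    (ι : G → Z) (ℙ : Set (Set G)) (r ε R : ℝ) (g : G) : Set Z :=
  {ξ | ξ ∈ bdryZ ι ∧ ∃ γ ∈ raysTo S ι ξ 1,
      (∃ n : ℕ, (wdist S (γ n) g : ℝ) ≤ r) ∧
      ∃ i : ℕ, transitionAtRay S ℙ γ i ε R ∧ (wdist S (γ i) g : ℝ) ≤ 2 * R}

/-- The limit set of `A ⊆ G`: accumulation points of `ι(A)` in the boundary. -/
def limitSet {G : Type*} {Z : Type*} [TopologicalSpace Z] (ι : G → Z) (A : Set G) : Set Z :=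
  bdryZ ι ∩ closure (ι '' A)

/-- The Busemann (horofunction) limit `b_γ(x) = lim_t (d(x, γ(t)) − t)` along a ray `γ`. -/
noncomputable def busemann {G : Type*} [Group G] (S : Set G) (γ : ℕ → G) (x : G) : ℝ :=
  Filter.limsup (fun t : ℕ => (wdist S x (γ t) : ℝ) - (t : ℝ)) Filter.atTop

/-- The horofunction cocycle `B_ξ(x,y) = sup_{γ : γ₊ = ξ} (b_γ(x) − b_γ(y))` at `ξ`. -/
noncomputable def horoCocycle {G : Type*} [Group G] {Z : Type*} [TopologicalSpace Z]
    (S : Set G) (ι : G → Z) (ξ : Z) (x y : G) : ℝ :=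
  sSup ((fun γ => busemann S γ x - busemann S γ y) '' raysEnding S ι ξ)

/-- `Z` is a compactification of the Cayley graph of `(G,S)` by a boundary on which `G` acts
geometrically finitely: `ι` is an equivariant dense embedding of `G`, geodesic rays converge
to boundary points, every boundary point is the endpoint of geodesic rays from every vertex,
and every boundary point is either conical or bounded parabolic. -/
def IsGeomFinBoundary (G : Type*) [Group G] {Z : Type*} [TopologicalSpace Z] [MulAction G Z]
    (S : Set G) (ι : G → Z) : Prop :=
  Function.Injective ι ∧
  (∀ g h : G, g • ι h = ι (g * h)) ∧
  (∀ g : G, Continuous (fun z : Z => g • z)) ∧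
  Dense (Set.range ι) ∧
  (bdryZ ι).Nontrivial ∧
  (∀ ξ ∈ bdryZ ι, ∀ v : G, (raysTo S ι ξ v).Nonempty) ∧
  (∀ γ : ℕ → G, IsGeodesicRay S γ →
      ∃ ξ ∈ bdryZ ι, Filter.Tendsto (fun n => ι (γ n)) Filter.atTop (nhds ξ)) ∧
  (∀ ξ ∈ bdryZ ι, ξ ∈ conicalPts G ι ∨ IsBddParabolicPt G ι ξ)
open MeasureTheory

/-- A `σ`-dimensional visual density: a `G`-equivariant family of finite positive Radon
measures on the boundary `Z ∖ ι(G)`, mutually absolutely continuous with Radon–Nikodym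
derivatives pinched between `exp(∓σ d(v,w))` (up to a uniform multiplicative constant). -/
def IsVisualDensity {G : Type*} [Group G] {Z : Type*} [MetricSpace Z] [MeasurableSpace Z]
    [MulAction G Z] (S : Set G) (ι : G → Z) (σ : ℝ) (μ : G → Measure Z) : Prop :=
  (∀ v : G, IsFiniteMeasure (μ v)) ∧ (∀ v : G, μ v ≠ 0) ∧
  (∀ v : G, μ v (Set.range ι) = 0) ∧
  (∀ g v : G, μ (g * v) = Measure.map (fun z : Z => g • z) (μ v)) ∧
  ∃ C : ℝ, 0 < C ∧ ∀ v w : G, ∀ A : Set Z,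
    ENNReal.ofReal (C⁻¹ * Real.exp (-(σ * (wdist S v w : ℝ)))) * μ w A ≤ μ v A ∧
    μ v A ≤ ENNReal.ofReal (C * Real.exp (σ * (wdist S v w : ℝ))) * μ w A

/-- A `σ`-dimensional quasi-conformal density: a visual density whose Radon–Nikodym
derivatives satisfy `dμ_v/dμ_w(ξ) ≍ exp(−σ B_ξ(v,w))` at almost every conical point `ξ`. -/
def IsQuasiConformalDensity {G : Type*} [Group G] {Z : Type*} [MetricSpace Z]
    [MeasurableSpace Z] [MulAction G Z] (S : Set G) (ι : G → Z) (σ : ℝ)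
    (μ : G → Measure Z) : Prop :=
  IsVisualDensity S ι σ μ ∧
  ∃ C : ℝ, 0 < C ∧ ∀ v w : G,
    ∀ᵐ ξ ∂(μ w), ξ ∈ conicalPts G ι →
      ENNReal.ofReal (C⁻¹ * Real.exp (-(σ * horoCocycle S ι ξ v w))) ≤
          (μ v).rnDeriv (μ w) ξ ∧
        (μ v).rnDeriv (μ w) ξ ≤
          ENNReal.ofReal (C * Real.exp (-(σ * horoCocycle S ι ξ v w)))

/-- The weight `H(d(v,g)) e^{−s d(v,g)}` of the orbit point `g` in Patterson's construction. -/
noncomputable def psWeight {G : Type*} [Group G] (S : Set G) (H : ℝ → ℝ) (s : ℝ)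
    (v g : G) : ℝ≥0∞ :=
  ENNReal.ofReal (H (wdist S v g : ℝ) * Real.exp (-(s * (wdist S v g : ℝ))))

/-- The normalized approximating measure `μ_v^s` in Patterson's construction. -/
noncomputable def psApprox {G : Type*} [Group G] {Z : Type*} [MeasurableSpace Z] (S : Set G)
    (ι : G → Z) (H : ℝ → ℝ) (s : ℝ) (v : G) : Measure Z :=
  (∑' g : G, psWeight S H s 1 g)⁻¹ •
    Measure.sum (fun g : G => psWeight S H s v g • Measure.dirac (ι g))

/-- Patterson's slowly growing adjustment function `H`: monotone, positive, subexponentially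
growing, making the adjusted Poincaré series diverge exactly up to the growth rate `δ_G`. -/
def IsPattersonFunction {G : Type*} [Group G] (S : Set G) (H : ℝ → ℝ) : Prop :=
  Monotone H ∧ (∀ t : ℝ, 0 < H t) ∧
  (∀ ε > (0 : ℝ), ∃ t₀ : ℝ, ∀ t > t₀, ∀ a > (0 : ℝ),
      H (a + t) ≤ Real.exp (a * ε) * H t) ∧
  (∀ s : ℝ, s ≤ growthRate S →
      ¬ Summable (fun g : G => H (wdist S 1 g : ℝ) * Real.exp (-(s * (wdist S 1 g : ℝ))))) ∧
  (∀ s : ℝ, growthRate S < s →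
      Summable (fun g : G => H (wdist S 1 g : ℝ) * Real.exp (-(s * (wdist S 1 g : ℝ)))))

/-- `μ` is a family of Patterson–Sullivan measures for `(G,S)` on the compactification `Z`:
a weak-* limit, along a sequence `s_i ↓ δ_G`, of the normalized measures
`μ_v^{s}` built from a Patterson adjustment function `H`. -/
def IsPSMeasures {G : Type*} [Group G] {Z : Type*} [MetricSpace Z] [MeasurableSpace Z]
    (S : Set G) (ι : G → Z) (μ : G → Measure Z) : Prop :=
  (∀ v : G, IsFiniteMeasure (μ v)) ∧
  ∃ (H : ℝ → ℝ) (sq : ℕ → ℝ), IsPattersonFunction S H ∧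
    (∀ n : ℕ, growthRate S < sq n) ∧
    Filter.Tendsto sq Filter.atTop (nhds (growthRate S)) ∧
    ∀ (v : G) (f : C(Z, ℝ)),
      Filter.Tendsto (fun n => ∫ z, f z ∂(psApprox S ι H (sq n) v)) Filter.atTop
        (nhds (∫ z, f z ∂(μ v)))

section WordMetric

variable {G : Type*} [Group G] {S : Set G}

lemma wlen_le_length {w : List G} (hw : ∀ x ∈ w, x ∈ S) : wlen S w.prod ≤ w.length :=
  Nat.sInf_le ⟨w, hw, rfl, rfl⟩

open scoped Pointwise in
lemma IsSymmGen.exists_word (hS : IsSymmGen S) (g : G) :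
    ∃ w : List G, (∀ x ∈ w, x ∈ S) ∧ w.length = wlen S g ∧ w.prod = g := by
  obtain ⟨-, hgen, hinv, -⟩ := hS
  have hg : g ∈ Submonoid.closure (S ∪ S⁻¹) := by
    rw [← Subgroup.closure_toSubmonoid, hgen]
    exact Subgroup.mem_top g
  obtain ⟨l, hl, hprod⟩ := Submonoid.exists_list_of_mem_closure hg
  have hne : {n : ℕ | ∃ w : List G, (∀ x ∈ w, x ∈ S) ∧ w.length = n ∧ w.prod = g}.Nonempty :=
    ⟨l.length, l, fun x hx => (hl x hx).elim id fun h => by simpa using hinv _ h, rfl, hprod⟩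
  exact Nat.sInf_mem hne

lemma IsSymmGen.wlen_mul_le (hS : IsSymmGen S) (g h : G) :
    wlen S (g * h) ≤ wlen S g + wlen S h := by
  obtain ⟨u, hu, hul, rfl⟩ := hS.exists_word g
  obtain ⟨w, hw, hwl, rfl⟩ := hS.exists_word h
  rw [← hul, ← hwl, ← List.prod_append, ← List.length_append]
  exact wlen_le_length fun x hx => (List.mem_append.1 hx).elim (hu x) (hw x)

lemma IsSymmGen.wdist_triangle (hS : IsSymmGen S) (x y z : G) :
    wdist S x z ≤ wdist S x y + wdist S y z := by
  have h := hS.wlen_mul_le (x⁻¹ * y) (y⁻¹ * z)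
  rwa [show x⁻¹ * y * (y⁻¹ * z) = x⁻¹ * z by group] at h

open scoped Pointwise in
/-- Balls in the word metric are finite and grow at most exponentially. -/
lemma IsSymmGen.exists_ball_card_le (hS : IsSymmGen S) :
    ∃ N : ℕ, 1 ≤ N ∧ ∀ n : ℕ, {g : G | wlen S g ≤ n}.Finite ∧
      {g : G | wlen S g ≤ n}.ncard ≤ N ^ n := by
  classical
  set T : Finset G := insert 1 hS.1.toFinset
  have hT1 : (1 : G) ∈ T := Finset.mem_insert_self _ _
  have hword : ∀ w : List G, (∀ x ∈ w, x ∈ S) → w.prod ∈ T ^ w.length := by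
    intro w
    induction w with
    | nil => simp
    | cons a w ih =>
      intro hw
      rw [List.prod_cons, List.length_cons, pow_succ']
      refine Finset.mul_mem_mul ?_ (ih fun x hx => hw x (List.mem_cons_of_mem _ hx))
      exact Finset.mem_insert_of_mem (hS.1.mem_toFinset.2 (hw a List.mem_cons_self))
  have hsub : ∀ n : ℕ, {g : G | wlen S g ≤ n} ⊆ ((T ^ n : Finset G) : Set G) := by
    intro n g hg
    obtain ⟨w, hw, hwl, rfl⟩ := hS.exists_word g
    exact Finset.pow_subset_pow_right hT1 (hwl.trans_le hg) (hword w hw)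
  refine ⟨T.card, Finset.card_pos.2 ⟨1, hT1⟩, fun n => ⟨(T ^ n).finite_toSet.subset (hsub n), ?_⟩⟩
  calc {g : G | wlen S g ≤ n}.ncard ≤ ((T ^ n : Finset G) : Set G).ncard :=
        Set.ncard_le_ncard (hsub n) (T ^ n).finite_toSet
    _ = (T ^ n).card := Set.ncard_coe_finset _
    _ ≤ T.card ^ n := Finset.card_pow_le

lemma growthRate_eq_limsup_ncard (S : Set G) :
    growthRate S =
      limsup (fun n : ℕ => Real.log ({g : G | wlen S g ≤ n}.ncard : ℝ) / (n : ℝ)) atTop := by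
  simp only [growthRate, growthRateOn, mem_univ, true_and]
  rfl

/-- The Poincaré series converges at every exponent above the growth rate. -/
lemma IsSymmGen.summable_of_growthRate_lt (hS : IsSymmGen S) {σ : ℝ} (h : growthRate S < σ) :
    Summable (fun g : G => Real.exp (-(σ * (wdist S 1 g : ℝ)))) := by
  classical
  obtain ⟨N, hN, hball⟩ := hS.exists_ball_card_le
  set c : ℕ → ℝ := fun n => ({g : G | wlen S g ≤ n}.ncard : ℝ) with hc
  obtain ⟨τ, hτ, hτσ⟩ := exists_between h
  rw [growthRate_eq_limsup_ncard] at hτ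
  have hone : (1 : G) ∈ {g : G | wlen S g ≤ 0} := wlen_le_length (w := []) (by simp)
  have hcpos : ∀ n, 0 < c n := fun n => Nat.cast_pos.2 <|
    (Set.ncard_pos (hball n).1).2 ⟨1, (show wlen S (1 : G) ≤ 0 from hone).trans n.zero_le⟩
  have hlog : ∀ n : ℕ, Real.log (c n) / n ≤ Real.log N := by
    intro n
    refine div_le_of_le_mul₀ n.cast_nonneg (Real.log_nonneg (by exact_mod_cast hN)) ?_
    rw [mul_comm, ← Real.log_pow, ← Nat.cast_pow]
    exact Real.log_le_log (hcpos n) (Nat.cast_le.2 (hball n).2)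
  have hev := eventually_lt_of_limsup_lt hτ (isBoundedUnder_of ⟨_, hlog⟩)
  have hsum : Summable fun n : ℕ => c n * Real.exp (-(σ * n)) := by
    have hgeom : Summable fun n : ℕ => Real.exp (n * (τ - σ)) :=
      Real.summable_exp_nat_mul_iff.2 (by linarith)
    refine hgeom.of_norm_bounded_eventually_nat ?_
    filter_upwards [hev, eventually_gt_atTop 0] with n hn hn0
    have hn0' : (0 : ℝ) < n := Nat.cast_pos.2 hn0
    have hcn : c n ≤ Real.exp (τ * n) :=
      (Real.log_le_iff_le_exp (hcpos n)).1 ((div_lt_iff₀ hn0').1 hn).le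
    rw [Real.norm_of_nonneg (mul_nonneg (hcpos n).le (Real.exp_pos _).le)]
    calc c n * Real.exp (-(σ * n)) ≤ Real.exp (τ * n) * Real.exp (-(σ * n)) := by gcongr
      _ = Real.exp (n * (τ - σ)) := by rw [← Real.exp_add]; ring_nf
  have hterm : ∀ n : ℕ, 0 ≤ c n * Real.exp (-(σ * n)) :=
    fun n => mul_nonneg (hcpos n).le (Real.exp_pos _).le
  refine summable_of_sum_le (c := ∑' n : ℕ, c n * Real.exp (-(σ * n)))
    (fun g => (Real.exp_pos _).le) fun T => ?_
  calc ∑ g ∈ T, Real.exp (-(σ * (wdist S 1 g : ℝ)))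
      = ∑ g ∈ T, Real.exp (-(σ * (wlen S g : ℝ))) := by simp [wdist]
    _ = ∑ n ∈ T.image (wlen S), ∑ g ∈ T with wlen S g = n, Real.exp (-(σ * (wlen S g : ℝ))) :=
        (Finset.sum_fiberwise_of_maps_to (fun g hg => Finset.mem_image_of_mem _ hg) _).symm
    _ ≤ ∑ n ∈ T.image (wlen S), c n * Real.exp (-(σ * n)) := by
        refine Finset.sum_le_sum fun n _ => ?_
        rw [Finset.sum_congr rfl (g := fun _ => Real.exp (-(σ * n)))
          (fun g hg => by rw [(Finset.mem_filter.1 hg).2]), Finset.sum_const, nsmul_eq_mul]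
        gcongr
        rw [hc, Nat.cast_le, ← Set.ncard_coe_finset]
        exact Set.ncard_le_ncard (fun g hg => (Finset.mem_filter.1 hg).2.le) (hball n).1
    _ ≤ ∑' n : ℕ, c n * Real.exp (-(σ * n)) := hsum.sum_le_tsum _ fun n _ => hterm n

end WordMetric

section Busemann

variable {G : Type*} [Group G] {S : Set G}

lemma IsGeodesicRay.injective {γ : ℕ → G} (hγ : IsGeodesicRay S γ) : Function.Injective γ := by
  intro i j hij
  have h := hγ i j
  rw [hij, hγ j j] at h
  omega

lemma IsGeodesicRay.busemann_apply {γ : ℕ → G} (hγ : IsGeodesicRay S γ) (n : ℕ) :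
    busemann S γ (γ n) = -n := by
  unfold busemann
  rw [limsup_congr (v := fun _ => (-n : ℝ)), limsup_const]
  filter_upwards [eventually_ge_atTop n] with t ht
  rw [hγ n t, show ((n : ℤ) - t).natAbs = t - n by omega, Nat.cast_sub ht]
  ring

lemma IsGeodesicRay.busemann_sub_le (hS : IsSymmGen S) {γ : ℕ → G} (hγ : IsGeodesicRay S γ)
    (x y : G) : busemann S γ x - busemann S γ y ≤ wdist S x y := by
  have hupper : ∀ z : G, ∀ t : ℕ, (wdist S z (γ t) : ℝ) - t ≤ wdist S z (γ 0) := by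
    intro z t
    have h := hS.wdist_triangle z (γ 0) (γ t)
    rw [hγ 0 t, show ((0 : ℕ) - t : ℤ).natAbs = t by omega] at h
    have h' : (wdist S z (γ t) : ℝ) ≤ wdist S z (γ 0) + t := by exact_mod_cast h
    linarith
  have hlower : ∀ z : G, ∀ t : ℕ, -(wdist S (γ 0) z : ℝ) ≤ (wdist S z (γ t) : ℝ) - t := by
    intro z t
    have h := hS.wdist_triangle (γ 0) z (γ t)
    rw [hγ 0 t, show ((0 : ℕ) - t : ℤ).natAbs = t by omega] at h
    have h' : (t : ℝ) ≤ wdist S (γ 0) z + wdist S z (γ t) := by exact_mod_cast h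
    linarith
  have hbdd : ∀ z : G, IsBoundedUnder (· ≤ ·) atTop fun t : ℕ => (wdist S z (γ t) : ℝ) - t :=
    fun z => isBoundedUnder_of ⟨_, hupper z⟩
  have hcobdd : ∀ z : G, IsCoboundedUnder (· ≤ ·) atTop fun t : ℕ => (wdist S z (γ t) : ℝ) - t :=
    fun z => (isBoundedUnder_of (r := (· ≥ ·)) ⟨_, hlower z⟩).isCoboundedUnder_le
  rw [sub_le_iff_le_add']
  unfold busemann
  rw [← limsup_add_const _ _ _ (hbdd y) (hcobdd y)]
  refine limsup_le_limsup (Eventually.of_forall fun t => ?_) (hcobdd x)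
    (isBoundedUnder_of ⟨wdist S y (γ 0) + wdist S x y, fun t => by
      have := hupper y t
      linarith⟩)
  have h : (wdist S x (γ t) : ℝ) ≤ wdist S x y + wdist S y (γ t) := by
    exact_mod_cast hS.wdist_triangle x y (γ t)
  dsimp only
  linarith

/-- Along a geodesic ray ending at `ξ`, the horofunction cocycle is at least the distance. -/
lemma IsSymmGen.wdist_le_horoCocycle (hS : IsSymmGen S) {Z : Type*} [TopologicalSpace Z]
    {ι : G → Z} {ξ : Z} {v : G} {γ : ℕ → G} (hγ : γ ∈ raysTo S ι ξ v) (n : ℕ) :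
    (wdist S v (γ n) : ℝ) ≤ horoCocycle S ι ξ v (γ n) := by
  obtain ⟨rfl, hray, hlim⟩ := hγ
  refine le_csSup ⟨wdist S (γ 0) (γ n), ?_⟩ ⟨γ, ⟨hray, hlim⟩, ?_⟩
  · rintro _ ⟨β, hβ, rfl⟩
    exact hβ.1.busemann_sub_le hS _ _
  · dsimp only
    rw [hray.busemann_apply, hray.busemann_apply, hray 0 n]
    simp

end Busemann

/-- The set where `dμ/dν ≤ c` has `μ`-measure at most `c * ν(univ)`. -/
lemma MeasureTheory.Measure.measure_rnDeriv_le_le {α : Type*} [MeasurableSpace α]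
    (μ ν : Measure α) [IsFiniteMeasure μ] [IsFiniteMeasure ν] (h : μ ≪ ν) (c : ℝ≥0∞) :
    μ {x | μ.rnDeriv ν x ≤ c} ≤ c * ν univ := by
  have hmeas : MeasurableSet {x | μ.rnDeriv ν x ≤ c} :=
    measurableSet_le (Measure.measurable_rnDeriv μ ν) measurable_const
  calc μ {x | μ.rnDeriv ν x ≤ c} = ∫⁻ x in {x | μ.rnDeriv ν x ≤ c}, μ.rnDeriv ν x ∂ν :=
        (Measure.setLIntegral_rnDeriv' h hmeas).symm
    _ ≤ ∫⁻ _ in {x | μ.rnDeriv ν x ≤ c}, c ∂ν := setLIntegral_mono measurable_const fun _ hx => hx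
    _ = c * ν {x | μ.rnDeriv ν x ≤ c} := setLIntegral_const _ _
    _ ≤ c * ν univ := by gcongr; exact subset_univ _

/-- If the Poincaré series of a quasi-conformal density converges, then conical points are
null. -/
lemma IsQuasiConformalDensity.measure_conicalPts_eq_zero
    {G : Type*} [Group G] [Countable G] {Z : Type*} [MetricSpace Z]
    [MeasurableSpace Z] [BorelSpace Z] [MulAction G Z] {S : Set G} (hS : IsSymmGen S)
    {ι : G → Z} (hcont : ∀ g : G, Continuous (fun z : Z => g • z))
    (hrays : ∀ ξ ∈ bdryZ ι, ∀ v : G, (raysTo S ι ξ v).Nonempty)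
    {σ : ℝ} (hσ : 0 ≤ σ) {μ : G → Measure Z} (hqc : IsQuasiConformalDensity S ι σ μ)
    (hsum : Summable (fun g : G => Real.exp (-(σ * (wdist S 1 g : ℝ))))) :
    μ 1 (conicalPts G ι) = 0 := by
  obtain ⟨⟨hfin, -, -, hequiv, D, -, hD⟩, C, hC, hconf⟩ := hqc
  have hac : ∀ v w : G, μ v ≪ μ w := fun v w A hA => by
    simpa [hA] using (hD v w A).2
  have hmass : ∀ g : G, μ g univ = μ 1 univ := fun g => by
    have h := hequiv g 1
    rw [mul_one] at h
    rw [h, Measure.map_apply (hcont g).measurable MeasurableSet.univ, preimage_univ]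
  set c : G → ℝ≥0∞ := fun g => ENNReal.ofReal (C * Real.exp (-(σ * (wdist S 1 g : ℝ))))
  set E : G → Set Z := fun g => {ξ | (μ 1).rnDeriv (μ g) ξ ≤ c g}
  have hEsum : ∑' g, μ 1 (E g) ≠ ∞ := by
    refine ne_top_of_le_ne_top ?_ (ENNReal.tsum_le_tsum fun g =>
      (Measure.measure_rnDeriv_le_le (μ 1) (μ g) (hac 1 g) (c g)).trans_eq (by rw [hmass g]))
    rw [ENNReal.tsum_mul_right]
    exact ENNReal.mul_ne_top (hsum.mul_left C).tsum_ofReal_ne_top (measure_ne_top _ _)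
  have hae : ∀ᵐ ξ ∂(μ 1), ∀ g : G, ξ ∈ conicalPts G ι → (μ 1).rnDeriv (μ g) ξ ≤
      ENNReal.ofReal (C * Real.exp (-(σ * horoCocycle S ι ξ 1 g))) :=
    ae_all_iff.2 fun g => (hac 1 g).ae_le ((hconf 1 g).mono fun ξ h hξ => (h hξ).2)
  refine measure_mono_null_ae ?_ (measure_limsup_cofinite_eq_zero hEsum)
  filter_upwards [hae] with ξ hξ hcon
  obtain ⟨γ, hγ⟩ := hrays ξ hcon.1 1
  change ξ ∈ limsup E cofinite
  rw [mem_limsup_iff_frequently_mem, frequently_cofinite_iff_infinite]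
  refine (infinite_range_of_injective hγ.2.1.injective).mono ?_
  rintro _ ⟨n, rfl⟩
  refine (hξ (γ n) hcon).trans (ENNReal.ofReal_le_ofReal ?_)
  gcongr
  exact hS.wdist_le_horoCocycle hγ n

/-- If a `σ`-dimensional quasi-conformal density on the Bowditch boundary gives positive
measure to the set of conical points, then the Poincaré series `∑_g exp(−σ d(1,g))`
diverges; in particular `σ ≤ δ_G`. -/
theorem qc_density_positive_on_conical_implies_divergent
    {G : Type*} [Group G] [Countable G] {Z : Type*} [MetricSpace Z] [CompactSpace Z]
    [MeasurableSpace Z] [BorelSpace Z] [MulAction G Z]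
    (S : Set G) (hS : IsSymmGen S) (hne : ¬ IsElementaryGroup G)
    (Ps : Set (Subgroup G)) (hPs : Ps.Finite) (hrh : IsRelHypWrt G Ps)
    (ι : G → Z) (hbc : IsGeomFinBoundary G S ι)
    (σ : ℝ) (hσ : 0 ≤ σ)
    (μ : G → MeasureTheory.Measure Z) (hqc : IsQuasiConformalDensity S ι σ μ)
    (hpos : 0 < μ 1 (conicalPts G ι)) :
    ¬ Summable (fun g : G => Real.exp (-(σ * (wdist S 1 g : ℝ)))) ∧
      σ ≤ growthRate S := by
  obtain ⟨-, -, hcont, -, -, hrays, -, -⟩ := hbc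
  have hdiv : ¬ Summable (fun g : G => Real.exp (-(σ * (wdist S 1 g : ℝ)))) := fun hsum =>
    hpos.ne' (hqc.measure_conicalPts_eq_zero hS hcont hrays hσ hsum)
  exact ⟨hdiv, not_lt.1 fun h => hdiv (hS.summable_of_growthRate_lt h)⟩
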